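/- Fix integers b ≥ 2, n ≥ 1, m ≥ 1 and i_1,…,i_m ∈ {0,…,n−1}, and set i_0 = 0. Then #{A : {1,…,m}×{1,…,n} → {0,…,b−1} such that d(π(A_j)∘⋯∘π(A_1)) = i_j for all 1 ≤ j ≤ m} / b^{nm} = Π_{j=1}^m P_b(i_{j−1}, i_j). In particular, the number of descents after successive independent b-shuffles started at the identity forms a Markov chain on {0,1,…,n−1} with transition matrix P_b. -/

import Mathlib

/-- The ranking permutation (0-indexed): `rank v i` is the number of positions `i'`
whose value is smaller than `v i`, or equal to `v i` but occurring earlier.  This labels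
the entries from smallest to largest, breaking ties by position. -/
def rank {n : ℕ} {α : Type*} [LinearOrder α] (v : Fin n → α) (i : Fin n) : Fin n :=
  ⟨(Finset.univ.filter fun i' => v i' < v i ∨ (v i' = v i ∧ i' < i)).card, by
    calc (Finset.univ.filter fun i' => v i' < v i ∨ (v i' = v i ∧ i' < i)).card
        ≤ (Finset.univ.erase i).card := by
          apply Finset.card_le_card
          intro x hx
          rw [Finset.mem_filter] at hx
          rw [Finset.mem_erase]
          refine ⟨?_, Finset.mem_univ x⟩
          rintro rfl
          rcases hx.2 with h | h
          · exact lt_irrefl _ h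
          · exact lt_irrefl _ h.2
      _ < Finset.univ.card := Finset.card_erase_lt_of_mem (Finset.mem_univ i)
      _ = n := by simp⟩

/-- The number of descents of a map `σ : Fin n → Fin n`:
the number of indices `i` with `σ (i+1) < σ i`. -/
noncomputable def descents {n : ℕ} (σ : Fin n → Fin n) : ℕ :=
  Nat.card {i : Fin n // ∃ h : i.1 + 1 < n, σ ⟨i.1 + 1, h⟩ < σ i}

/-- The carries when adding the `n` numbers whose base-`b` digits are the rows of `C`
(column `s`, entry `t`): `carry C 0 = 0` and
`carry C (s+1) = ⌊(carry C s + Σ_t C s t) / b⌋`. -/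
def carry {b n m : ℕ} (C : Fin m → Fin n → Fin b) : ℕ → ℕ
  | 0 => 0
  | s + 1 =>
      if h : s < m then (carry C s + ∑ t, (C ⟨s, h⟩ t : ℕ)) / b
      else carry C s

/-- `tau A j` is the composition `π(A_j) ∘ ⋯ ∘ π(A_1)` of the ranking permutations of the
first `j` columns of `A` (columns `0,…,j-1` in 0-indexed notation). -/
def tau {b n m : ℕ} (A : Fin m → Fin n → Fin b) : ℕ → (Fin n → Fin n)
  | 0 => id
  | s + 1 => if h : s < m then rank (A ⟨s, h⟩) ∘ tau A s else tau A s


/-- Holte's "amazing matrix": the carries Markov chain transition probability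
`P_b(i,j) = b^{-n} · #{(x_1,…,x_n) ∈ {0,…,b−1}^n : jb ≤ i + x_1 + ⋯ + x_n ≤ (j+1)b − 1}`. -/
noncomputable def Pmat (b n : ℕ) (i j : ℕ) : ℝ :=
  (Nat.card {x : Fin n → Fin b //
      j * b ≤ i + ∑ t, (x t : ℕ) ∧ i + ∑ t, (x t : ℕ) ≤ (j + 1) * b - 1} : ℝ) / b ^ n

/-!
Let `τ` be a permutation of `n = k + 1` cards, `v` a digit vector and `w = v ∘ τ`. Since `rank`
compares the pairs `(v i, i)` lexicographically, `rank v ∘ τ` has a descent at `i` exactly when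
`w (i + 1) < w i + e i`, where `e i` is `1` or `0` according to whether `τ` has a descent at `i`.
This is exactly the condition under which the base-`b` subtraction
`x (i + 1) = w (i + 1) - w i - e i` has to borrow. Setting `x 0 = w 0` and telescoping,
`descents τ + ∑ x = w k + b * descents (rank v ∘ τ)`, so the new number of descents is the carry
`⌊(descents τ + ∑ x) / b⌋`. The map `v ↦ x` is a bijection, hence the number of `v` with a given new
number of descents depends on `τ` only through `descents τ` and is an entry of Holte's matrix.
-/

section Rank

lemma card_filter_lt_lt_card_filter_lt_iff {ι β : Type*} [Fintype ι] [LinearOrder β]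
    (f : ι → β) (i j : ι) :
    (Finset.univ.filter fun l => f l < f i).card < (Finset.univ.filter fun l => f l < f j).card ↔
      f i < f j := by
  refine ⟨fun hcard => ?_, fun hij => Finset.card_lt_card ?_⟩
  · contrapose! hcard
    exact Finset.card_le_card (Finset.monotone_filter_right _ fun l _ hl => hl.trans_le hcard)
  · refine (Finset.ssubset_iff_of_subset ?_).2 ⟨i, by simpa using hij, by simp⟩
    exact Finset.monotone_filter_right _ fun l _ hl => hl.trans hij

variable {n : ℕ} {α : Type*} [LinearOrder α] (v : Fin n → α)

lemma rank_lt_rank_iff (i j : Fin n) :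
    rank v i < rank v j ↔ v i < v j ∨ v i = v j ∧ i < j := by
  simpa only [Prod.Lex.toLex_lt_toLex, rank, Fin.mk_lt_mk] using
    card_filter_lt_lt_card_filter_lt_iff (fun l => toLex (v l, l)) i j

lemma rank_injective : Function.Injective (rank v) := by
  refine .of_lt_imp_ne fun i j hij => ?_
  rcases le_or_gt (v i) (v j) with hle | hgt
  · exact ((rank_lt_rank_iff v i j).2 (hle.lt_or_eq.imp_right fun heq => ⟨heq, hij⟩)).ne
  · exact ((rank_lt_rank_iff v j i).2 (Or.inl hgt)).ne'

end Rank

section Descents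

lemma descents_id (n : ℕ) : descents (id : Fin n → Fin n) = 0 := by
  have hno : IsEmpty {i : Fin n // ∃ h : i.1 + 1 < n, id ⟨i.1 + 1, h⟩ < id i} :=
    ⟨fun ⟨i, _, hlt⟩ => absurd (Fin.lt_def.1 hlt) (Nat.lt_succ_self i).not_gt⟩
  exact Nat.card_of_isEmpty

variable {k : ℕ}

/-- The indicator of a descent of `σ` between positions `i` and `i + 1`. It is a natural number
rather than a proposition because it also serves as the borrow entering a digit subtraction. -/
def descentIndicator (σ : Fin (k + 1) → Fin (k + 1)) (i : Fin k) : ℕ :=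
  if σ i.succ < σ i.castSucc then 1 else 0

lemma descentIndicator_le_one (σ : Fin (k + 1) → Fin (k + 1)) (i : Fin k) :
    descentIndicator σ i ≤ 1 := by
  unfold descentIndicator
  split_ifs <;> simp

lemma descents_eq_sum_descentIndicator (σ : Fin (k + 1) → Fin (k + 1)) :
    descents σ = ∑ i, descentIndicator σ i := by
  classical
  rw [descents, Nat.card_eq_fintype_card, Fintype.card_subtype, Finset.card_filter,
    Fin.sum_univ_castSucc, if_neg (by simp), add_zero]
  refine Finset.sum_congr rfl fun i _ => if_congr ?_ rfl rfl
  exact ⟨fun ⟨_, hlt⟩ => hlt, fun hlt => ⟨Nat.succ_lt_succ i.2, hlt⟩⟩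

lemma descentIndicator_rank_comp {b : ℕ} (v : Fin (k + 1) → Fin b)
    (τ : Fin (k + 1) → Fin (k + 1)) (i : Fin k) :
    descentIndicator (rank v ∘ τ) i =
      if (v (τ i.succ) : ℕ) < v (τ i.castSucc) + descentIndicator τ i then 1 else 0 := by
  refine if_congr ?_ rfl rfl
  rw [Function.comp_apply, Function.comp_apply, rank_lt_rank_iff, descentIndicator, Fin.lt_def,
    Fin.ext_iff]
  split_ifs <;> omega

end Descents

section Borrow

variable {k b : ℕ} [NeZero b]

lemma val_sub_sub_ofNat_add {e : ℕ} (he : e ≤ 1) (a c : Fin b) :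
    ((c - a - Fin.ofNat b e : Fin b) : ℕ) + a + e = c + b * if (c : ℕ) < a + e then 1 else 0 := by
  set x := c - a - Fin.ofNat b e with hx
  have hmod : ((x : ℕ) + a + e) % b = c := by
    have hc : x + a + Fin.ofNat b e = c := by rw [hx]; abel
    simpa [Fin.val_add] using congrArg Fin.val hc
  have hlt : (x : ℕ) + a + e < 2 * b := by omega
  rcases Nat.lt_or_ge ((x : ℕ) + a + e) b with hnoborrow | hborrow
  · rw [Nat.mod_eq_of_lt hnoborrow] at hmod
    rw [if_neg (by omega), hmod, mul_zero, add_zero]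
  · rw [Nat.mod_eq_sub_mod hborrow, Nat.mod_eq_of_lt (by omega)] at hmod
    rw [if_pos (by omega), mul_one]
    omega

/-- The first entry of `w` followed by its consecutive differences, each decreased by the
corresponding entry of `e`. For `G = Fin b` and `e` with entries `0` and `1`, these are the digits
obtained by subtracting each entry of `w` and an incoming borrow from the next entry. -/
def borrowDifferences {G : Type*} [Sub G] (e : Fin k → G) (w : Fin (k + 1) → G) :
    Fin (k + 1) → G :=
  Fin.cons (w 0) fun i => w i.succ - w i.castSucc - e i

lemma borrowDifferences_injective {G : Type*} [AddGroup G] (e : Fin k → G) :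
    Function.Injective (borrowDifferences e) := by
  intro w w' h
  obtain ⟨hzero, hsucc⟩ := Fin.cons_inj.1 h
  funext t
  induction t using Fin.induction with
  | zero => exact hzero
  | succ i ih => simpa [ih] using congrFun hsucc i

lemma sum_add_sum_borrowDifferences {e : Fin k → ℕ} (he : ∀ i, e i ≤ 1) (w : Fin (k + 1) → Fin b) :
    ∑ i, e i + ∑ t, (borrowDifferences (fun i => Fin.ofNat b (e i)) w t).val =
      w (Fin.last k) +
        b * ∑ i : Fin k, if (w i.succ : ℕ) < w i.castSucc + e i then 1 else 0 := by
  have hdigits := Finset.sum_congr (rfl : (Finset.univ : Finset (Fin k)) = Finset.univ) fun i _ =>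
    val_sub_sub_ofNat_add (he i) (w i.castSucc) (w i.succ)
  have htelescope := (Fin.sum_univ_succ fun t => (w t : ℕ)).symm.trans
    (Fin.sum_univ_castSucc fun t => (w t : ℕ))
  rw [Finset.sum_add_distrib, Finset.sum_add_distrib, Finset.sum_add_distrib, ← Finset.mul_sum]
    at hdigits
  rw [Fin.sum_univ_succ]
  simp only [borrowDifferences, Fin.cons_zero, Fin.cons_succ]
  omega

end Borrow

section Transition

variable {k b : ℕ} [NeZero b]

/-- The digit vector associated with shuffling `τ` by `v`: adding its digits to the incoming carry
`descents τ` produces the outgoing carry `descents (rank v ∘ τ)`. -/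
def carryDigits (τ : Fin (k + 1) → Fin (k + 1)) (v : Fin (k + 1) → Fin b) : Fin (k + 1) → Fin b :=
  borrowDifferences (fun i => Fin.ofNat b (descentIndicator τ i)) (v ∘ τ)

lemma carryDigits_bijective {τ : Fin (k + 1) → Fin (k + 1)} (hτ : Function.Bijective τ) :
    Function.Bijective (carryDigits (b := b) τ) :=
  (Finite.injective_iff_bijective.1 (borrowDifferences_injective _)).comp hτ.comp_right

lemma descents_add_sum_carryDigits (τ : Fin (k + 1) → Fin (k + 1)) (v : Fin (k + 1) → Fin b) :
    descents τ + ∑ t, (carryDigits τ v t : ℕ) =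
      v (τ (Fin.last k)) + b * descents (rank v ∘ τ) := by
  simp only [descents_eq_sum_descentIndicator, descentIndicator_rank_comp]
  exact sum_add_sum_borrowDifferences (descentIndicator_le_one τ) (v ∘ τ)

lemma descents_add_sum_carryDigits_div (τ : Fin (k + 1) → Fin (k + 1)) (v : Fin (k + 1) → Fin b) :
    (descents τ + ∑ t, (carryDigits τ v t : ℕ)) / b = descents (rank v ∘ τ) := by
  rw [descents_add_sum_carryDigits, Nat.add_mul_div_left _ _ (NeZero.pos b),
    Nat.div_eq_of_lt (v (τ (Fin.last k))).2, zero_add]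

/-- The number of ways to pass from carry `i` to carry `j` when adding a column of `n` digits in
base `b`; Holte's matrix entry `Pmat b n i j` without its normalisation. -/
noncomputable def carryCount (b n i j : ℕ) : ℕ :=
  Nat.card {x : Fin n → Fin b // (i + ∑ t, (x t : ℕ)) / b = j}

lemma Pmat_eq_carryCount_div (n i j : ℕ) : Pmat b n i j = carryCount b n i j / (b : ℝ) ^ n := by
  simp only [Pmat, carryCount, Nat.div_eq_iff (NeZero.pos b), add_one_mul]

lemma card_descents_rank_comp_eq {τ : Fin (k + 1) → Fin (k + 1)} (hτ : Function.Bijective τ)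
    (j : ℕ) :
    Nat.card {v : Fin (k + 1) → Fin b // descents (rank v ∘ τ) = j} =
      carryCount b (k + 1) (descents τ) j :=
  Nat.card_congr <| (Equiv.ofBijective _ (carryDigits_bijective hτ)).subtypeEquiv fun v => by
    rw [Equiv.ofBijective_apply, descents_add_sum_carryDigits_div]

end Transition

section Tau

variable {b n m : ℕ}

lemma tau_bijective (A : Fin m → Fin n → Fin b) (s : ℕ) : Function.Bijective (tau A s) := by
  induction s with
  | zero => exact Function.bijective_id
  | succ s ih =>
    rw [tau]
    split_ifs
    · exact (Finite.injective_iff_bijective.1 (rank_injective _)).comp ih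
    · exact ih

lemma tau_snoc_of_le (A : Fin m → Fin n → Fin b) (v : Fin n → Fin b) {s : ℕ} (hs : s ≤ m) :
    tau (Fin.snoc A v : Fin (m + 1) → Fin n → Fin b) s = tau A s := by
  induction s with
  | zero => rfl
  | succ s ih =>
    have hcolumn : (Fin.snoc A v : Fin (m + 1) → Fin n → Fin b) ⟨s, by omega⟩ = A ⟨s, hs⟩ :=
      Fin.snoc_castSucc (α := fun _ => Fin n → Fin b) v A ⟨s, hs⟩
    rw [tau, tau, dif_pos (by omega), dif_pos (by omega), ih (by omega), hcolumn]

lemma tau_snoc_last (A : Fin m → Fin n → Fin b) (v : Fin n → Fin b) :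
    tau (Fin.snoc A v : Fin (m + 1) → Fin n → Fin b) (m + 1) = rank v ∘ tau A m := by
  have hcolumn : (Fin.snoc A v : Fin (m + 1) → Fin n → Fin b) ⟨m, by omega⟩ = v :=
    Fin.snoc_last (α := fun _ => Fin n → Fin b) v A
  rw [tau, dif_pos (by omega), tau_snoc_of_le A v le_rfl, hcolumn]

end Tau

section Paths

lemma card_subtype_prod_of_card_fiber_eq {α β : Type*} [Finite α] [Finite β] {P : α → Prop}
    {Q : α → β → Prop} {c : ℕ} (hc : ∀ a, P a → Nat.card {y // Q a y} = c) :
    Nat.card {p : α × β // P p.1 ∧ Q p.1 p.2} = Nat.card {a // P a} * c := by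
  classical
  have := Fintype.ofFinite α
  have hfiber (a : α) : Nat.card {y // P a ∧ Q a y} = if P a then c else 0 := by
    split_ifs with ha
    · simpa only [ha, true_and] using hc a ha
    · simp [ha]
  rw [Nat.card_congr (Equiv.subtypeProdEquivSigmaSubtype fun a y => P a ∧ Q a y), Nat.card_sigma]
  simp only [hfiber, Finset.sum_ite, Finset.sum_const, smul_eq_mul, mul_zero, add_zero,
    Nat.card_eq_fintype_card, Fintype.card_subtype]

variable {b n m : ℕ} {i : ℕ → ℕ}

/-- The digit array `A` encodes `m` successive `b`-shuffles, started at the identity, whose numbers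
of descents are `i 1, …, i m`. The entry `i 0` is the starting value and is not constrained. -/
def IsDescentPath (i : ℕ → ℕ) (A : Fin m → Fin n → Fin b) : Prop :=
  ∀ j : Fin m, descents (tau A (j.1 + 1)) = i (j.1 + 1)

lemma isDescentPath_snoc_iff (A : Fin m → Fin n → Fin b) (v : Fin n → Fin b) :
    IsDescentPath i (Fin.snoc A v : Fin (m + 1) → Fin n → Fin b) ↔
      IsDescentPath i A ∧ descents (rank v ∘ tau A m) = i (m + 1) := by
  rw [IsDescentPath, Fin.forall_fin_succ', Fin.val_last, tau_snoc_last]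
  refine and_congr_left' (forall_congr' fun j => ?_)
  rw [Fin.val_castSucc, tau_snoc_of_le A v j.2]

lemma IsDescentPath.descents_tau {A : Fin m → Fin n → Fin b} (h0 : i 0 = 0)
    (hA : IsDescentPath i A) : descents (tau A m) = i m := by
  cases m with
  | zero => rw [h0, tau, descents_id]
  | succ m => exact hA (Fin.last m)

lemma card_isDescentPath_succ [NeZero b] {k : ℕ} (h0 : i 0 = 0) (m : ℕ) :
    Nat.card {A : Fin (m + 1) → Fin (k + 1) → Fin b // IsDescentPath i A} =
      Nat.card {A : Fin m → Fin (k + 1) → Fin b // IsDescentPath i A} *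
        carryCount b (k + 1) (i m) (i (m + 1)) := by
  have hstep (A : Fin m → Fin (k + 1) → Fin b) (hA : IsDescentPath i A) :
      Nat.card {v : Fin (k + 1) → Fin b // descents (rank v ∘ tau A m) = i (m + 1)} =
        carryCount b (k + 1) (i m) (i (m + 1)) := by
    rw [card_descents_rank_comp_eq (tau_bijective A m), hA.descents_tau h0]
  let appendColumn := (Equiv.prodComm (Fin m → Fin (k + 1) → Fin b) _).trans
    (Fin.snocEquiv fun _ : Fin (m + 1) => Fin (k + 1) → Fin b)
  rw [← card_subtype_prod_of_card_fiber_eq hstep]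
  exact Nat.card_congr
    (appendColumn.subtypeEquiv fun p => (isDescentPath_snoc_iff p.1 p.2).symm).symm

lemma card_isDescentPath [NeZero b] {k : ℕ} (h0 : i 0 = 0) (m : ℕ) :
    Nat.card {A : Fin m → Fin (k + 1) → Fin b // IsDescentPath i A} =
      ∏ j ∈ Finset.range m, carryCount b (k + 1) (i j) (i (j + 1)) := by
  induction m with
  | zero => simp [IsDescentPath]
  | succ m ih => rw [card_isDescentPath_succ h0, ih, Finset.prod_range_succ]

end Paths

/-- **Theorem 1 of Diaconis–Fulman**: the number of descents in successive `b`-shuffles of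
`n` cards forms a Markov chain on `{0,1,…,n−1}` with Holte's carries transition matrix
`P_b`.  Explicitly, with `i 0 = 0` and targets `i 1,…,i m ∈ {0,…,n−1}`, the probability
that `d(π(A_j)∘⋯∘π(A_1)) = i j` for all `1 ≤ j ≤ m` (for a uniformly random digit array
`A`) equals `Π_{j=1}^m P_b(i_{j−1}, i_j)`. -/
theorem descent_chain_transition_matrix (b n m : ℕ) (hb : 2 ≤ b) (hn : 1 ≤ n) (hm : 1 ≤ m)
    (i : ℕ → ℕ) (h0 : i 0 = 0) (hi : ∀ j, 1 ≤ j → j ≤ m → i j < n) :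
    (Nat.card {A : Fin m → Fin n → Fin b //
        ∀ j : Fin m, descents (tau A (j.1 + 1)) = i (j.1 + 1)} : ℝ) / (b : ℝ) ^ (n * m) =
      ∏ j ∈ Finset.range m, Pmat b n (i j) (i (j + 1)) := by
  obtain ⟨k, rfl⟩ := Nat.exists_eq_add_of_le' hn
  have : NeZero b := ⟨by omega⟩
  have hcount := card_isDescentPath (b := b) (k := k) h0 m
  unfold IsDescentPath at hcount
  simp only [hcount, Pmat_eq_carryCount_div, Finset.prod_div_distrib, Finset.prod_const,
    Finset.card_range, Nat.cast_prod, pow_mul]
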